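/- Let (A,ω,τ,K) be an ergodic C*-dynamical system which is uniformly asymptotically abelian with respect to a Følner net (Λ_{1α}) in K, with ω tracial, and let (Λ_{2α}) be a Følner net in K over the same directed set. If (g,h) ↦ ω(τ_h(a₁) τ_g(a₂) τ_{gh}(a₃) τ_g(a₄) τ_h(a₅)) is (Σ|_K × Σ|_K)-measurable for all a₁,...,a₅ ∈ A, then lim_α sup_{g₁,g₂ ∈ K} | M_{α,g₁,g₂}( ω(τ_h(a₁) τ_g(a₂) τ_{gh}(a₃) τ_g(a₄) τ_h(a₅)) ) − ω(a₅a₁) ω(a₃) ω(a₂a₄) | = 0 for all a₁, a₂, a₃, a₄, a₅ ∈ A. -/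

import Mathlib

open Filter Topology
open scoped Pointwise ComplexOrder

/-- A Følner net in a (sub)semigroup `K` of a measure group `(G, Σ, μ)`. -/
structure FolnerNetIn {G : Type*} [Group G] [MeasurableSpace G]
    (μ : MeasureTheory.Measure G) (K : Set G) where
  idx : Type
  [pre : Preorder idx]
  [ne : Nonempty idx]
  [dir : IsDirected idx (· ≤ ·)]
  Lam : idx → Set G
  meas : ∀ α, MeasurableSet (Lam α) ∧ Lam α ⊆ K
  fin : ∀ᶠ α in atTop, 0 < μ (Lam α) ∧ μ (Lam α) < ⊤
  folner : ∀ g ∈ K, Tendsto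
    (fun α => (μ (symmDiff (Lam α) (Lam α * {g}))).toReal / (μ (Lam α)).toReal)
    atTop (𝓝 0)

attribute [instance] FolnerNetIn.pre FolnerNetIn.ne FolnerNetIn.dir

open MeasureTheory

/-- Ergodicity of `(A, ω, τ, K)` along a Følner net in `K`. -/
def FolnerNetIn.ErgodicAlong
    {A : Type*} [NormedRing A] [StarRing A] [CStarRing A] [NormedAlgebra ℂ A]
    [CompleteSpace A] [StarModule ℂ A]
    {G : Type*} [CommGroup G] [MeasurableSpace G] {μ : Measure G} {K : Set G}
    (F : FolnerNetIn μ K) (ω : A →ₗ[ℂ] ℂ) (τ : G → A ≃⋆ₐ[ℂ] A) : Prop :=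
  ∀ a b : A,
    Tendsto (fun α => (μ (F.Lam α)).toReal⁻¹ • ∫ g in F.Lam α, ω (a * τ g b) ∂μ)
      atTop (𝓝 (ω a * ω b))

/-!
By traciality and invariance the correlation `ω (τ_h(a₁) τ_g(a₂) τ_{gh}(a₃) τ_g(a₄) τ_h(a₅))`
equals `ω (a₅ a₁ τ_g(x_h))` with `x_h = τ_{h⁻¹}(a₂ τ_h(a₃) a₄)`, and `ω (x_h) = ω (a₄ a₂ τ_h(a₃))`.
The elements `x_h` are bounded, so it suffices that the averages over `g` of `ω (u τ_g(x))` converge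
to `ω (u) ω (x)` uniformly in `x` from the unit ball and in the translate of the Følner sets:
applied to the inner integral this leaves the average over `h` of `ω (a₅ a₁) ω (a₄ a₂ τ_h(a₃))`, to
which it applies again.

The uniform convergence is von Neumann's mean ergodic theorem in the GNS space, in weak form. The
vector of `u*` is the sum of an invariant vector and a limit of coboundaries `w - U_{k⁻¹} w`;
pairing a coboundary with `U_g x` gives averages that telescope to an integral over `Λ ∆ Λk`,
bounded by `‖w‖ ‖x‖` times the relative size of that set, whatever the translate of `Λ`. Ergodicity
identifies the contribution of the invariant vector as `ω (u) ω (x)`.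
-/

section SetAverages

variable {X E : Type*} [MeasurableSpace X] {μ : Measure X} [NormedAddCommGroup E]
  {f g : X → E} {s t : Set X} {C : ℝ}

theorem integrableOn_of_norm_le_const (hf : AEStronglyMeasurable f (μ.restrict t)) (hst : s ⊆ t)
    (hs : μ s < ⊤) (hC : ∀ x, ‖f x‖ ≤ C) : IntegrableOn f s μ :=
  ⟨hf.mono_measure (Measure.restrict_mono_set μ hst),
    .restrict_of_bounded (C := C) hs (.of_forall hC)⟩

variable [NormedSpace ℝ E]

theorem setAverage_add (hf : IntegrableOn f s μ) (hg : IntegrableOn g s μ) :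
    ⨍ x in s, (f x + g x) ∂μ = ⨍ x in s, f x ∂μ + ⨍ x in s, g x ∂μ :=
  integral_add hf.to_average hg.to_average

theorem setAverage_sub (hf : IntegrableOn f s μ) (hg : IntegrableOn g s μ) :
    ⨍ x in s, (f x - g x) ∂μ = ⨍ x in s, f x ∂μ - ⨍ x in s, g x ∂μ :=
  integral_sub hf.to_average hg.to_average

theorem norm_setAverage_le (hC₀ : 0 ≤ C) (hC : ∀ x ∈ s, ‖f x‖ ≤ C) :
    ‖⨍ x in s, f x ∂μ‖ ≤ C := by
  rcases eq_top_or_lt_top (μ s) with hs | hs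
  · simpa [setAverage_eq, Measure.real, hs] using hC₀
  · rw [setAverage_eq, norm_smul, norm_inv, Real.norm_of_nonneg measureReal_nonneg]
    exact inv_mul_le_of_le_mul₀ measureReal_nonneg hC₀
      ((norm_setIntegral_le_of_norm_le_const hs hC).trans_eq (mul_comm _ _))

theorem norm_setAverage_sub_le_add {c : E} {C' : ℝ} (hf : IntegrableOn f s μ)
    (hg : IntegrableOn g s μ) (hC₀ : 0 ≤ C) (hC : ∀ x ∈ s, ‖f x - g x‖ ≤ C)
    (hC' : ‖⨍ x in s, g x ∂μ - c‖ ≤ C') : ‖⨍ x in s, f x ∂μ - c‖ ≤ C + C' := by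
  have hfg : ‖⨍ x in s, f x ∂μ - ⨍ x in s, g x ∂μ‖ ≤ C :=
    setAverage_sub hf hg ▸ norm_setAverage_le hC₀ hC
  simpa only [sub_add_sub_cancel] using norm_add_le_of_le hfg hC'

theorem norm_setIntegral_sub_setIntegral_le (hs : MeasurableSet s) (ht : MeasurableSet t)
    (hsμ : μ s < ⊤) (htμ : μ t < ⊤) (hfs : IntegrableOn f s μ) (hft : IntegrableOn f t μ)
    (hC : ∀ x, ‖f x‖ ≤ C) :
    ‖∫ x in s, f x ∂μ - ∫ x in t, f x ∂μ‖ ≤ C * μ.real (symmDiff s t) := by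
  have hdiff : ∫ x in s, f x ∂μ - ∫ x in t, f x ∂μ
      = ∫ x in s \ t, f x ∂μ - ∫ x in t \ s, f x ∂μ := by
    rw [← integral_inter_add_sdiff ht hfs, ← integral_inter_add_sdiff hs hft, Set.inter_comm t s,
      add_sub_add_left_eq_sub]
  have hst : μ (s \ t) < ⊤ := (measure_mono Set.sdiff_subset).trans_lt hsμ
  have hts : μ (t \ s) < ⊤ := (measure_mono Set.sdiff_subset).trans_lt htμ
  calc ‖∫ x in s, f x ∂μ - ∫ x in t, f x ∂μ‖
      ≤ ‖∫ x in s \ t, f x ∂μ‖ + ‖∫ x in t \ s, f x ∂μ‖ := hdiff ▸ norm_sub_le _ _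
    _ ≤ C * μ.real (s \ t) + C * μ.real (t \ s) :=
        add_le_add (norm_setIntegral_le_of_norm_le_const hst fun x _ => hC x)
          (norm_setIntegral_le_of_norm_le_const hts fun x _ => hC x)
    _ = C * μ.real (symmDiff s t) := by
        rw [measureReal_symmDiff_eq hs ht hsμ.ne htμ.ne, mul_add]

end SetAverages

section SetAveragesProd

variable {X Y E : Type*} [MeasurableSpace X] [MeasurableSpace Y] {μ : Measure X} {ν : Measure Y}
  [NormedAddCommGroup E] [SecondCountableTopology E] [MeasurableSpace E] [BorelSpace E]
  {f : X → Y → E} {K s : Set X} {L t : Set Y} {C : ℝ}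

theorem integrable_prod_restrict_of_norm_le_const (hK : MeasurableSet K) (hL : MeasurableSet L)
    (hf : Measurable fun p : K × L => f p.1 p.2) (hsK : s ⊆ K) (htL : t ⊆ L)
    (hs : μ s < ⊤) (ht : ν t < ⊤) (hC : ∀ x y, ‖f x y‖ ≤ C) :
    Integrable (fun p : X × Y => f p.1 p.2) ((μ.restrict s).prod (ν.restrict t)) := by
  have : Fact (μ s < ⊤) := ⟨hs⟩
  have : Fact (ν t < ⊤) := ⟨ht⟩
  have hKL : ((μ.restrict s).prod (ν.restrict t)).restrict (K ×ˢ L)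
      = (μ.restrict s).prod (ν.restrict t) := by
    rw [← Measure.prod_restrict, Measure.restrict_restrict hK, Measure.restrict_restrict hL,
      Set.inter_eq_right.2 hsK, Set.inter_eq_right.2 htL]
  have hmeas : AEMeasurable (fun p : X × Y => f p.1 p.2) ((μ.restrict s).prod (ν.restrict t)) :=
    hKL ▸ aemeasurable_restrict_of_measurable_subtype (hK.prod hL)
      (hf.comp (MeasurableEquiv.Set.prod K L).measurable)
  exact .of_bound hmeas.aestronglyMeasurable C (.of_forall fun p => hC p.1 p.2)

theorem integrableOn_setAverage_right [NormedSpace ℝ E] (hK : MeasurableSet K)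
    (hL : MeasurableSet L) (hf : Measurable fun p : K × L => f p.1 p.2) (hsK : s ⊆ K)
    (htL : t ⊆ L) (hs : μ s < ⊤) (ht : ν t < ⊤) (hC : ∀ x y, ‖f x y‖ ≤ C) :
    IntegrableOn (fun x => ⨍ y in t, f x y ∂ν) s μ := by
  have : Fact (ν t < ⊤) := ⟨ht⟩
  simp only [setAverage_eq]
  exact (integrable_prod_restrict_of_norm_le_const hK hL hf hsK htL hs ht
    hC).integral_prod_left.smul (ν.real t)⁻¹

end SetAveragesProd

theorem setAverage_setAverage {X Y E : Type*} [MeasurableSpace X] [MeasurableSpace Y]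
    [NormedAddCommGroup E] [NormedSpace ℝ E] (μ : Measure X) (ν : Measure Y) (s : Set X)
    (t : Set Y) (f : X → Y → E) :
    ⨍ x in s, ⨍ y in t, f x y ∂ν ∂μ
      = (μ.real s * ν.real t)⁻¹ • ∫ x in s, ∫ y in t, f x y ∂ν ∂μ := by
  simp only [setAverage_eq, integral_smul, smul_smul, mul_inv]

section RightInvariance

variable {G : Type*} [MeasurableSpace G]

theorem measurableMul_of_measurableSet_mul_singleton [CommGroup G]
    (h : ∀ (V : Set G) (g : G), MeasurableSet V → MeasurableSet (V * {g})) : MeasurableMul G where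
  measurable_const_mul g V hV := by
    simpa [Set.mul_singleton, Set.image_mul_right, mul_comm] using h V g⁻¹ hV
  measurable_mul_const g V hV := by
    simpa [Set.mul_singleton, Set.image_mul_right] using h V g⁻¹ hV

theorem isMulRightInvariant_of_measure_mul_singleton [Group G] [MeasurableMul G] {μ : Measure G}
    (h : ∀ (V : Set G) (g : G), MeasurableSet V → μ (V * {g}) = μ V) :
    μ.IsMulRightInvariant where
  map_mul_right_eq_self g := by
    ext V hV
    rw [Measure.map_apply (measurable_mul_const g) hV]
    simpa [Set.mul_singleton, Set.image_mul_right] using h V g⁻¹ hV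

end RightInvariance

section Translates

variable {G : Type*} [Group G] [MeasurableSpace G] [MeasurableMul G] {s : Set G}

theorem measurableSet_mul_singleton (hs : MeasurableSet s) (g : G) : MeasurableSet (s * {g}) := by
  rw [Set.mul_singleton]
  exact (MeasurableEquiv.mulRight g).measurableSet_image.2 hs

theorem measure_mul_singleton (μ : Measure G) [μ.IsMulRightInvariant] (s : Set G) (g : G) :
    μ (s * {g}) = μ s := by
  rw [Set.mul_singleton, Set.image_mul_right, measure_preimage_mul_right]

theorem setIntegral_mul_singleton {μ : Measure G} [μ.IsMulRightInvariant] {E : Type*}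
    [NormedAddCommGroup E] [NormedSpace ℝ E] (f : G → E) (s : Set G) (g : G) :
    ∫ x in s * {g}, f x ∂μ = ∫ x in s, f (x * g) ∂μ := by
  rw [Set.mul_singleton]
  exact (measurePreserving_mul_right μ g).setIntegral_image_emb
    (MeasurableEquiv.mulRight g).measurableEmbedding f s

end Translates

/-- A family `Λ` of subsets of `K` that is Følner in `K` along the filter `l`: the relative size of
`Λ i ∆ (Λ i * {g})` tends to zero for `g ∈ K`. Only translations by elements of `K` are considered,
which is why Mathlib's `IsFoelner`, formulated for a group action, does not apply. -/
structure IsFolnerIn {G ι : Type*} [Mul G] [MeasurableSpace G] (μ : Measure G) (K : Set G)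
    (l : Filter ι) (Λ : ι → Set G) : Prop where
  measurableSet : ∀ i, MeasurableSet (Λ i)
  subset : ∀ i, Λ i ⊆ K
  eventually_measure : ∀ᶠ i in l, 0 < μ (Λ i) ∧ μ (Λ i) < ⊤
  tendsto_symmDiff : ∀ g ∈ K,
    Tendsto (fun i => μ.real (symmDiff (Λ i) (Λ i * {g})) / μ.real (Λ i)) l (𝓝 0)

theorem FolnerNetIn.isFolnerIn {G : Type*} [Group G] [MeasurableSpace G] {μ : Measure G}
    {K : Set G} (F : FolnerNetIn μ K) : IsFolnerIn μ K atTop F.Lam where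
  measurableSet i := (F.meas i).1
  subset i := (F.meas i).2
  eventually_measure := F.fin
  tendsto_symmDiff := F.folner

theorem mul_singleton_subset {M : Type*} [Mul M] {K : Subsemigroup M} {s : Set M} {k : M}
    (hs : s ⊆ K) (hk : k ∈ K) : s * {k} ⊆ K :=
  Set.mul_subset_iff.2 fun _ hx _ hy => K.mul_mem (hs hx) (Set.mem_singleton_iff.1 hy ▸ hk)

section MeanErgodic

variable {𝕜 H G : Type*} [RCLike 𝕜] [NormedAddCommGroup H] [InnerProductSpace 𝕜 H] [CommGroup G]

local notation "⟪" x ", " y "⟫" => inner 𝕜 x y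

/-- The span of the coboundaries `w - U k⁻¹ w`, `k ∈ K`, of a unitary representation `U`. The
inverse makes the pairing `⟪w - U k⁻¹ w, U g x⟫` involve only the translate `g * k`, which stays
in the semigroup `K` along with `g`. -/
def coboundaries (U : G →* (H ≃ₗᵢ[𝕜] H)) (K : Set G) : Submodule 𝕜 H :=
  ⨆ k : K, LinearMap.range (LinearMap.id - (U (k : G)⁻¹).toLinearEquiv.toLinearMap)

variable {U : G →* (H ≃ₗᵢ[𝕜] H)} {K : Subsemigroup G}

theorem inner_inv_apply_apply (U : G →* (H ≃ₗᵢ[𝕜] H)) (k g : G) (w x : H) :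
    ⟪U k⁻¹ w, U g x⟫ = ⟪w, U (g * k) x⟫ := by
  rw [← (U k).inner_map_map, mul_comm, map_mul]
  simp

theorem sub_map_inv_mem_coboundaries {K : Set G} {k : G} (hk : k ∈ K) (w : H) :
    w - U k⁻¹ w ∈ coboundaries U K :=
  Submodule.mem_iSup_of_mem (⟨k, hk⟩ : K) ⟨w, rfl⟩

theorem map_eq_of_mem_orthogonal_coboundaries {K : Set G} {p : H}
    (hp : p ∈ (coboundaries U K)ᗮ) {k : G} (hk : k ∈ K) : U k p = p := by
  refine ext_inner_left 𝕜 fun w => ?_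
  have hw : ⟪w - U k⁻¹ w, p⟫ = 0 :=
    (Submodule.mem_orthogonal _ p).1 hp _ (sub_map_inv_mem_coboundaries hk w)
  have hinv : ⟪U k⁻¹ w, p⟫ = ⟪w, U k p⟫ := by simpa using inner_inv_apply_apply U k 1 w p
  rw [← hinv, ← sub_eq_zero.1 ((inner_sub_left _ _ _).symm.trans hw)]

theorem inner_apply_of_mem_orthogonal_coboundaries {K : Set G} {p : H}
    (hp : p ∈ (coboundaries U K)ᗮ) {k : G} (hk : k ∈ K) (x : H) : ⟪p, U k x⟫ = ⟪p, x⟫ := by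
  conv_lhs => rw [← map_eq_of_mem_orthogonal_coboundaries hp hk]
  exact (U k).inner_map_map p x

theorem sub_starProjection_mem_closure_coboundaries [CompleteSpace H] (U : G →* (H ≃ₗᵢ[𝕜] H))
    (K : Set G) (v : H) :
    v - (coboundaries U K)ᗮ.starProjection v ∈ closure (coboundaries U K : Set H) := by
  rw [← Submodule.topologicalClosure_coe, ← Submodule.orthogonal_orthogonal_eq_closure]
  exact Submodule.sub_starProjection_mem_orthogonal v

theorem norm_inner_apply_le (U : G →* (H ≃ₗᵢ[𝕜] H)) (g : G) (v x : H) :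
    ‖⟪v, U g x⟫‖ ≤ ‖v‖ * ‖x‖ :=
  (norm_inner_le_norm _ _).trans_eq (by rw [LinearIsometryEquiv.norm_map])

variable [MeasurableSpace G] {μ : Measure G}

theorem norm_setAverage_inner_le (U : G →* (H ≃ₗᵢ[𝕜] H)) (μ : Measure G) (s : Set G) (v x : H) :
    ‖⨍ g in s, ⟪v, U g x⟫ ∂μ‖ ≤ ‖v‖ * ‖x‖ :=
  norm_setAverage_le (by positivity) fun g _ => norm_inner_apply_le U g v x

theorem setAverage_inner_of_mem_orthogonal_coboundaries {K s : Set G} {p : H}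
    (hp : p ∈ (coboundaries U K)ᗮ) (hsK : s ⊆ K) (hs : MeasurableSet s) (h₀ : μ s ≠ 0)
    (ht : μ s ≠ ⊤) (x : H) : ⨍ g in s, ⟪p, U g x⟫ ∂μ = ⟪p, x⟫ := by
  rw [setAverage_congr_fun hs (g := fun _ => ⟪p, x⟫) (.of_forall fun g hg =>
    inner_apply_of_mem_orthogonal_coboundaries hp (hsK hg) x), setAverage_const h₀ ht]

theorem integrableOn_inner_apply {K s : Set G}
    (hU : ∀ v x, AEStronglyMeasurable (fun g => ⟪v, U g x⟫) (μ.restrict K))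
    (hsK : s ⊆ K) (ht : μ s < ⊤) (v x : H) : IntegrableOn (fun g => ⟪v, U g x⟫) s μ :=
  integrableOn_of_norm_le_const (hU v x) hsK ht fun g => norm_inner_apply_le U g v x

variable [MeasurableMul G] [μ.IsMulRightInvariant]

theorem norm_setAverage_inner_coboundary_le
    (hU : ∀ v x, AEStronglyMeasurable (fun g => ⟪v, U g x⟫) (μ.restrict K))
    {s : Set G} {k : G} (hk : k ∈ K) (hs : MeasurableSet s) (hsK : s ⊆ K) (ht : μ s < ⊤)
    (w x : H) :
    ‖⨍ g in s, ⟪w - U k⁻¹ w, U g x⟫ ∂μ‖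
      ≤ ‖w‖ * ‖x‖ * (μ.real (symmDiff s (s * {k})) / μ.real s) := by
  have hskK : s * {k} ⊆ K := mul_singleton_subset hsK hk
  have hsk : μ (s * {k}) < ⊤ := (measure_mul_singleton μ s k).trans_lt ht
  have htelescope : ∫ g in s, ⟪w - U k⁻¹ w, U g x⟫ ∂μ
      = ∫ g in s, ⟪w, U g x⟫ ∂μ - ∫ g in s * {k}, ⟪w, U g x⟫ ∂μ := by
    rw [setIntegral_mul_singleton]
    simp only [inner_sub_left, ← inner_inv_apply_apply]
    exact integral_sub (integrableOn_inner_apply hU hsK ht w x)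
      (integrableOn_inner_apply hU hsK ht _ x)
  rw [setAverage_eq, norm_smul, norm_inv, Real.norm_of_nonneg measureReal_nonneg, htelescope,
    ← div_eq_inv_mul, mul_div_assoc']
  gcongr
  exact norm_setIntegral_sub_setIntegral_le hs (measurableSet_mul_singleton hs k) ht hsk
    (integrableOn_inner_apply hU hsK ht w x) (integrableOn_inner_apply hU hskK hsk w x)
    fun g => norm_inner_apply_le U g w x

/-- The averages of `⟪v, U h x⟫` over the translates of `Λ i` contained in `K` tend to zero,
uniformly in the translate and in `x` from the unit ball. -/
def AveragesToZero {ι : Type*} (U : G →* (H ≃ₗᵢ[𝕜] H)) (μ : Measure G) (K : Set G) (l : Filter ι)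
    (Λ : ι → Set G) (v : H) : Prop :=
  ∀ ε > 0, ∀ᶠ i in l, ∀ g, Λ i * {g} ⊆ K → ∀ x, ‖⨍ h in Λ i * {g}, ⟪v, U h x⟫ ∂μ‖ ≤ ε * ‖x‖

namespace AveragesToZero

variable {ι : Type*} {l : Filter ι} {Λ : ι → Set G} {v w : H}

omit [MeasurableMul G] [μ.IsMulRightInvariant] in
theorem zero {K : Set G} : AveragesToZero U μ K l Λ 0 := by
  intro ε hε
  refine .of_forall fun i g _ x => ?_
  simpa [setAverage_eq] using by positivity

theorem add {K : Set G} (hΛ : IsFolnerIn μ K l Λ)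
    (hU : ∀ v x, AEStronglyMeasurable (fun g => ⟪v, U g x⟫) (μ.restrict K))
    (hv : AveragesToZero U μ K l Λ v) (hw : AveragesToZero U μ K l Λ w) :
    AveragesToZero U μ K l Λ (v + w) := by
  intro ε hε
  filter_upwards [hΛ.eventually_measure, hv (ε / 2) (half_pos hε), hw (ε / 2) (half_pos hε)]
    with i hi hvi hwi g hg x
  have hfin : μ (Λ i * {g}) < ⊤ := (measure_mul_singleton μ _ g).trans_lt hi.2
  simp only [inner_add_left]
  rw [setAverage_add (integrableOn_inner_apply hU hg hfin v x)
    (integrableOn_inner_apply hU hg hfin w x)]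
  linarith [norm_add_le_of_le (hvi g hg x) (hwi g hg x)]

theorem coboundary (hΛ : IsFolnerIn μ K l Λ)
    (hU : ∀ v x, AEStronglyMeasurable (fun g => ⟪v, U g x⟫) (μ.restrict K)) {k : G} (hk : k ∈ K)
    (w : H) : AveragesToZero U μ K l Λ (w - U k⁻¹ w) := by
  intro ε hε
  have hlim : Tendsto (fun i => ‖w‖ * (μ.real (symmDiff (Λ i) (Λ i * {k})) / μ.real (Λ i))) l
      (𝓝 0) := by simpa using (hΛ.tendsto_symmDiff k hk).const_mul ‖w‖
  filter_upwards [hΛ.eventually_measure, hlim.eventually_le_const hε] with i hi hle g hg x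
  have hfin : μ (Λ i * {g}) < ⊤ := (measure_mul_singleton μ _ g).trans_lt hi.2
  have hsymm : symmDiff (Λ i * {g}) (Λ i * {g} * {k}) = symmDiff (Λ i) (Λ i * {k}) * {g} := by
    rw [mul_right_comm]
    simp only [Set.mul_singleton, Set.image_symmDiff (mul_left_injective g)]
  have hbound := norm_setAverage_inner_coboundary_le hU hk
    (measurableSet_mul_singleton (hΛ.measurableSet i) g) hg hfin w x
  simp only [hsymm, measureReal_def, measure_mul_singleton] at hbound hle
  calc _ ≤ _ := hbound
    _ = _ := mul_right_comm _ _ _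
    _ ≤ ε * ‖x‖ := by gcongr

theorem of_mem_coboundaries (hΛ : IsFolnerIn μ K l Λ)
    (hU : ∀ v x, AEStronglyMeasurable (fun g => ⟪v, U g x⟫) (μ.restrict K))
    (hv : v ∈ coboundaries U (K : Set G)) : AveragesToZero U μ K l Λ v := by
  induction hv using Submodule.iSup_induction' with
  | mem k v hv =>
    obtain ⟨w, rfl⟩ := hv
    exact coboundary hΛ hU k.2 w
  | zero => exact zero
  | add v w _ _ hv hw => exact add hΛ hU hv hw

theorem of_mem_closure {K : Set G} (hΛ : IsFolnerIn μ K l Λ)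
    (hU : ∀ v x, AEStronglyMeasurable (fun g => ⟪v, U g x⟫) (μ.restrict K)) {N : Set H}
    (hN : ∀ w ∈ N, AveragesToZero U μ K l Λ w) (hv : v ∈ closure N) :
    AveragesToZero U μ K l Λ v := by
  intro ε hε
  obtain ⟨w, hwN, hvw⟩ := Metric.mem_closure_iff.1 hv (ε / 2) (half_pos hε)
  filter_upwards [hΛ.eventually_measure, hN w hwN (ε / 2) (half_pos hε)] with i hi hwi g hg x
  have hfin : μ (Λ i * {g}) < ⊤ := (measure_mul_singleton μ _ g).trans_lt hi.2
  have hsplit : ⨍ h in Λ i * {g}, ⟪v, U h x⟫ ∂μ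
      = ⨍ h in Λ i * {g}, ⟪v - w, U h x⟫ ∂μ + ⨍ h in Λ i * {g}, ⟪w, U h x⟫ ∂μ := by
    rw [← setAverage_add (integrableOn_inner_apply hU hg hfin _ x)
      (integrableOn_inner_apply hU hg hfin w x)]
    simp only [← inner_add_left, sub_add_cancel]
  calc ‖⨍ h in Λ i * {g}, ⟪v, U h x⟫ ∂μ‖
      ≤ ‖v - w‖ * ‖x‖ + ε / 2 * ‖x‖ :=
        hsplit ▸ norm_add_le_of_le (norm_setAverage_inner_le U μ _ _ x) (hwi g hg x)
    _ ≤ ε / 2 * ‖x‖ + ε / 2 * ‖x‖ := by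
        gcongr
        exact (dist_eq_norm v w ▸ hvw).le
    _ = ε * ‖x‖ := by ring

end AveragesToZero

variable [CompleteSpace H] {ι : Type*} {l : Filter ι} {Λ : ι → Set G}

theorem eventually_norm_setAverage_inner_sub_le (hΛ : IsFolnerIn μ K l Λ)
    (hU : ∀ v x, AEStronglyMeasurable (fun g => ⟪v, U g x⟫) (μ.restrict K)) (v : H) {ε : ℝ}
    (hε : 0 < ε) : ∀ᶠ i in l, ∀ g, Λ i * {g} ⊆ K → ∀ x,
      ‖⨍ h in Λ i * {g}, ⟪v, U h x⟫ ∂μ - ⟪(coboundaries U (K : Set G))ᗮ.starProjection v, x⟫‖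
        ≤ ε * ‖x‖ := by
  have hnull := AveragesToZero.of_mem_closure hΛ hU
    (fun w hw => AveragesToZero.of_mem_coboundaries hΛ hU hw)
    (sub_starProjection_mem_closure_coboundaries U K v)
  filter_upwards [hΛ.eventually_measure, hnull ε hε] with i hi hnull g hg x
  have hfin : μ (Λ i * {g}) < ⊤ := (measure_mul_singleton μ _ g).trans_lt hi.2
  have hpos : μ (Λ i * {g}) ≠ 0 := (measure_mul_singleton μ _ g).trans_ne hi.1.ne'
  rw [← setAverage_inner_of_mem_orthogonal_coboundaries (Submodule.starProjection_apply_mem _ v)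
    hg (measurableSet_mul_singleton (hΛ.measurableSet i) g) hpos hfin.ne x,
    ← setAverage_sub (integrableOn_inner_apply hU hg hfin _ x)
      (integrableOn_inner_apply hU hg hfin _ x)]
  simpa only [inner_sub_left] using hnull g hg x

theorem tendsto_setAverage_inner (hΛ : IsFolnerIn μ K l Λ)
    (hU : ∀ v x, AEStronglyMeasurable (fun g => ⟪v, U g x⟫) (μ.restrict K)) (v x : H) :
    Tendsto (fun i => ⨍ g in Λ i, ⟪v, U g x⟫ ∂μ) l
      (𝓝 ⟪(coboundaries U (K : Set G))ᗮ.starProjection v, x⟫) := by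
  refine Metric.nhds_basis_closedBall.tendsto_right_iff.2 fun ε hε => ?_
  filter_upwards [eventually_norm_setAverage_inner_sub_le hΛ hU v
    (ε := ε / (‖x‖ + 1)) (by positivity)] with i hi
  rw [mem_closedBall_iff_norm]
  calc _ ≤ ε / (‖x‖ + 1) * ‖x‖ := by
        simpa only [Set.singleton_one, mul_one] using hi 1 (by simpa using hΛ.subset i) x
    _ ≤ ε / (‖x‖ + 1) * (‖x‖ + 1) := by gcongr; exact (lt_add_one _).le
    _ = ε := by field_simp

end MeanErgodic

theorem aestronglyMeasurable_inner_of_denseRange {𝕜 H E G : Type*} [RCLike 𝕜]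
    [NormedAddCommGroup H] [InnerProductSpace 𝕜 H] [MeasurableSpace G] {ν : Measure G}
    {U : G → H ≃ₗᵢ[𝕜] H} {e : E → H} (he : DenseRange e)
    (hU : ∀ a b, AEStronglyMeasurable (fun g => inner 𝕜 (e a) (U g (e b))) ν) (v x : H) :
    AEStronglyMeasurable (fun g => inner 𝕜 v (U g x)) ν := by
  obtain ⟨p, hp, hlim⟩ := mem_closure_iff_seq_limit.1 ((he.prodMap he) (v, x))
  choose ab hab using hp
  refine aestronglyMeasurable_of_tendsto_ae atTop
    (f := fun n g => inner 𝕜 (p n).1 (U g (p n).2)) (fun n => ?_) (.of_forall fun g => ?_)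
  · simpa only [← hab n, Prod.map] using hU (ab n).1 (ab n).2
  · exact (hlim.fst_nhds).inner (((U g).continuous.tendsto x).comp hlim.snd_nhds)

section GNS

variable {A : Type*} [CStarAlgebra A] [PartialOrder A] [StarOrderedRing A] (f : A →ₚ[ℂ] ℂ)

/-- The canonical map `a ↦ [a]` of `A` into the GNS Hilbert space of a positive functional `f`. -/
noncomputable def gnsVector : A →ₗ[ℂ] f.GNS :=
  UniformSpace.Completion.toComplₗᵢ.toLinearMap ∘ₗ f.toPreGNS.toLinearMap

theorem inner_gnsVector (a b : A) : inner ℂ (gnsVector f a) (gnsVector f b) = f (star a * b) :=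
  UniformSpace.Completion.inner_coe _ _

theorem denseRange_gnsVector : DenseRange (gnsVector f) :=
  UniformSpace.Completion.denseRange_coe.comp f.toPreGNS.surjective.denseRange
    (UniformSpace.Completion.continuous_coe _)

variable {f}

theorem norm_gnsVector_one (hf : f 1 = 1) : ‖gnsVector f 1‖ = 1 := by
  rw [@norm_eq_sqrt_re_inner ℂ, inner_gnsVector, star_one, one_mul, hf, RCLike.one_re,
    Real.sqrt_one]

theorem norm_gnsVector_le (hf : f 1 = 1) (a : A) : ‖gnsVector f a‖ ≤ ‖a‖ := by
  have hcyclic : f.gnsStarAlgHom a (gnsVector f 1) = gnsVector f a := by simp [gnsVector]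
  calc ‖gnsVector f a‖ ≤ ‖f.gnsStarAlgHom a‖ * ‖gnsVector f 1‖ :=
        hcyclic ▸ (f.gnsStarAlgHom a).le_opNorm _
    _ ≤ ‖a‖ := by
        rw [norm_gnsVector_one hf, mul_one]
        exact NonUnitalStarAlgHom.norm_apply_le f.gnsStarAlgHom a

theorem norm_gnsVector_map {φ : A ≃⋆ₐ[ℂ] A} (hφ : ∀ a, f (φ a) = f a) (a : A) :
    ‖gnsVector f (φ a)‖ = ‖gnsVector f a‖ := by
  simp only [@norm_eq_sqrt_re_inner ℂ, inner_gnsVector, ← map_star, ← map_mul, hφ]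

/-- The unitary `[a] ↦ [φ a]` of the GNS space induced by an automorphism `φ` leaving `f`
invariant. -/
noncomputable def gnsIsometryEquiv (φ : A ≃⋆ₐ[ℂ] A) (hφ : ∀ a, f (φ a) = f a) :
    f.GNS ≃ₗᵢ[ℂ] f.GNS :=
  φ.toAlgEquiv.toLinearEquiv.extendOfIsometry (gnsVector f) (gnsVector f) (denseRange_gnsVector f)
    (denseRange_gnsVector f) (norm_gnsVector_map hφ)

theorem gnsIsometryEquiv_gnsVector (φ : A ≃⋆ₐ[ℂ] A) (hφ : ∀ a, f (φ a) = f a) (a : A) :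
    gnsIsometryEquiv φ hφ (gnsVector f a) = gnsVector f (φ a) :=
  LinearEquiv.extendOfIsometry_eq _ _ _ (denseRange_gnsVector f) (denseRange_gnsVector f)
    (norm_gnsVector_map hφ) a

theorem ext_gnsVector {S T : f.GNS ≃ₗᵢ[ℂ] f.GNS}
    (h : ∀ a, S (gnsVector f a) = T (gnsVector f a)) : S = T :=
  LinearIsometryEquiv.ext <| congr_fun <|
    (denseRange_gnsVector f).equalizer S.continuous T.continuous (funext h)

variable {G : Type*} [Group G]

/-- The unitary representation `g ↦ ([a] ↦ [τ g a])` on the GNS space which implements an action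
`τ` leaving `f` invariant. -/
noncomputable def gnsUnitary (τ : G →* (A ≃⋆ₐ[ℂ] A)) (hf : ∀ g a, f (τ g a) = f a) :
    G →* (f.GNS ≃ₗᵢ[ℂ] f.GNS) where
  toFun g := gnsIsometryEquiv (τ g) (hf g)
  map_one' := ext_gnsVector fun a => by simp [gnsIsometryEquiv_gnsVector]
  map_mul' g h := ext_gnsVector fun a => by simp [gnsIsometryEquiv_gnsVector]

theorem inner_gnsVector_gnsUnitary {τ : G →* (A ≃⋆ₐ[ℂ] A)} (hf : ∀ g a, f (τ g a) = f a)
    (g : G) (a b : A) :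
    inner ℂ (gnsVector f a) (gnsUnitary τ hf g (gnsVector f b)) = f (star a * τ g b) :=
  (congrArg _ (gnsIsometryEquiv_gnsVector _ (hf g) b)).trans (inner_gnsVector f _ _)

theorem aestronglyMeasurable_inner_gnsUnitary [MeasurableSpace G] {ν : Measure G}
    {τ : G →* (A ≃⋆ₐ[ℂ] A)} (hf : ∀ g a, f (τ g a) = f a)
    (hmeas : ∀ a b, AEStronglyMeasurable (fun g => f (a * τ g b)) ν) (v x : f.GNS) :
    AEStronglyMeasurable (fun g => inner ℂ v (gnsUnitary τ hf g x)) ν := by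
  refine aestronglyMeasurable_inner_of_denseRange (U := gnsUnitary τ hf) (denseRange_gnsVector f)
    (fun a b => ?_) v x
  exact (hmeas (star a) b).congr
    (.of_forall fun g => (inner_gnsVector_gnsUnitary hf g a b).symm)

end GNS

section States

variable {A : Type*} [CStarAlgebra A] {ω : A →ₗ[ℂ] ℂ}

/-- The states of a unital C⋆-algebra, with positivity stated without an order on `A`. -/
structure IsState (ω : A →ₗ[ℂ] ℂ) : Prop where
  nonneg : ∀ a, 0 ≤ ω (star a * a)
  map_one : ω 1 = 1

namespace IsState

theorem exists_positiveLinearMap (hω : IsState ω) :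
    ∃ (_ : PartialOrder A) (_ : StarOrderedRing A) (f : A →ₚ[ℂ] ℂ), f.toLinearMap = ω := by
  let _ := CStarAlgebra.spectralOrder A
  have _ := CStarAlgebra.spectralOrderedRing A
  refine ⟨_, inferInstance, PositiveLinearMap.mk₀ ω fun a ha => ?_, rfl⟩
  obtain ⟨b, rfl⟩ := CStarAlgebra.nonneg_iff_eq_star_mul_self.1 ha
  exact hω.nonneg b

theorem norm_apply_le (hω : IsState ω) (a : A) : ‖ω a‖ ≤ ‖a‖ := by
  obtain ⟨_, _, f, rfl⟩ := hω.exists_positiveLinearMap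
  have hinner : inner ℂ (gnsVector f 1) (gnsVector f a) = f a := by simp [inner_gnsVector]
  calc ‖f a‖ ≤ ‖gnsVector f 1‖ * ‖gnsVector f a‖ := hinner ▸ norm_inner_le_norm _ _
    _ = ‖gnsVector f a‖ := by rw [norm_gnsVector_one hω.map_one, one_mul]
    _ ≤ ‖a‖ := norm_gnsVector_le hω.map_one a

end IsState

end States

section UniformErgodic

variable {A G ι : Type*} [CStarAlgebra A] [CommGroup G] [MeasurableSpace G] [MeasurableMul G]
  {μ : Measure G} [μ.IsMulRightInvariant] {K : Subsemigroup G} {τ : G →* (A ≃⋆ₐ[ℂ] A)}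
  {l : Filter ι} {Λ : ι → Set G}

theorem IsState.eventually_norm_setAverage_apply_mul_sub_le {ω : A →ₗ[ℂ] ℂ} (hω : IsState ω)
    (hinv : ∀ g a, ω (τ g a) = ω a)
    (hmeas : ∀ a b, AEStronglyMeasurable (fun g => ω (a * τ g b)) (μ.restrict K))
    {F : FolnerNetIn μ (K : Set G)} (hF : F.ErgodicAlong ω τ) (hΛ : IsFolnerIn μ K l Λ) (u : A)
    {ε : ℝ} (hε : 0 < ε) : ∀ᶠ i in l, ∀ g, Λ i * {g} ⊆ K → ∀ x,
      ‖⨍ h in Λ i * {g}, ω (u * τ h x) ∂μ - ω u * ω x‖ ≤ ε * ‖x‖ := by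
  obtain ⟨_, _, f, rfl⟩ := hω.exists_positiveLinearMap
  simp only [PositiveLinearMap.coe_toLinearMap] at hinv hmeas ⊢
  have hU := aestronglyMeasurable_inner_gnsUnitary hinv hmeas
  have hinner : ∀ x h, inner ℂ (gnsVector f (star u)) (gnsUnitary τ hinv h (gnsVector f x))
      = f (u * τ h x) := fun x h => by rw [inner_gnsVector_gnsUnitary, star_star]
  have hproj : ∀ x, inner ℂ
      ((coboundaries (gnsUnitary τ hinv) (K : Set G))ᗮ.starProjection (gnsVector f (star u)))
      (gnsVector f x) = f u * f x := fun x => by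
    refine tendsto_nhds_unique (tendsto_setAverage_inner F.isFolnerIn hU _ _) ?_
    simp only [hinner, setAverage_eq]
    exact hF u x
  filter_upwards [eventually_norm_setAverage_inner_sub_le hΛ hU (gnsVector f (star u)) hε]
    with i hi g hg x
  calc _ ≤ ε * ‖gnsVector f x‖ := by simpa only [hinner, hproj] using hi g hg (gnsVector f x)
    _ ≤ ε * ‖x‖ := by
        gcongr
        exact norm_gnsVector_le hω.map_one x

end UniformErgodic

section Correlations

variable {A G : Type*} [CStarAlgebra A] [CommGroup G] {ω : A →ₗ[ℂ] ℂ} {τ : G →* (A ≃⋆ₐ[ℂ] A)}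

theorem apply_correlation_eq (htr : ∀ a b, ω (a * b) = ω (b * a)) (hinv : ∀ g a, ω (τ g a) = ω a)
    (a₁ a₂ a₃ a₄ a₅ : A) (g h : G) :
    ω (τ h a₁ * τ g a₂ * τ (g * h) a₃ * τ g a₄ * τ h a₅)
      = ω (a₅ * a₁ * τ g (τ h⁻¹ (a₂ * τ h a₃ * a₄))) := by
  have hcomm : ∀ x, τ h (τ g (τ h⁻¹ x)) = τ g x := fun x => by
    simp only [← StarAlgEquiv.mul_apply, ← map_mul, mul_inv_cancel_comm_assoc]
  rw [← hinv h (_ * τ g _), map_mul (τ h), hcomm, htr _ (τ h a₅)]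
  simp only [map_mul, StarAlgEquiv.mul_apply, mul_assoc]

theorem apply_map_inv_mul_map_mul (htr : ∀ a b, ω (a * b) = ω (b * a))
    (hinv : ∀ g a, ω (τ g a) = ω a) (a b c : A) (h : G) :
    ω (τ h⁻¹ (a * τ h b * c)) = ω (c * a * τ h b) := by
  rw [hinv, htr, mul_assoc]

theorem norm_map_inv_mul_map_mul_le (τ : G →* (A ≃⋆ₐ[ℂ] A)) (a b c : A) (h : G) :
    ‖τ h⁻¹ (a * τ h b * c)‖ ≤ ‖a‖ * ‖b‖ * ‖c‖ :=
  calc ‖τ h⁻¹ (a * τ h b * c)‖ ≤ ‖a * τ h b * c‖ := NonUnitalStarAlgHom.norm_apply_le _ _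
    _ ≤ ‖a‖ * ‖τ h b‖ * ‖c‖ := norm_mul₃_le
    _ ≤ ‖a‖ * ‖b‖ * ‖c‖ := by
        gcongr
        exact NonUnitalStarAlgHom.norm_apply_le _ _

theorem IsState.norm_apply_mul_map_le (hω : IsState ω) (a x : A) (g : G) :
    ‖ω (a * τ g x)‖ ≤ ‖a‖ * ‖x‖ :=
  calc ‖ω (a * τ g x)‖ ≤ ‖a‖ * ‖τ g x‖ := (hω.norm_apply_le _).trans (norm_mul_le _ _)
    _ ≤ ‖a‖ * ‖x‖ := by
        gcongr
        exact NonUnitalStarAlgHom.norm_apply_le _ _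

variable [MeasurableSpace G] {μ : Measure G}

theorem norm_setAverage_setAverage_correlation_sub_le (htr : ∀ a b, ω (a * b) = ω (b * a))
    (hinv : ∀ g a, ω (τ g a) = ω a) (a₁ a₂ a₃ a₄ a₅ : A) {s t : Set G} {η : ℝ} (hη : 0 ≤ η)
    (hint : IntegrableOn (fun h => ⨍ g in t,
      ω (τ h a₁ * τ g a₂ * τ (g * h) a₃ * τ g a₄ * τ h a₅) ∂μ) s μ)
    (hint' : IntegrableOn (fun h => ω (a₄ * a₂ * τ h a₃)) s μ)
    (ht : ∀ x, ‖⨍ g in t, ω (a₅ * a₁ * τ g x) ∂μ - ω (a₅ * a₁) * ω x‖ ≤ η * ‖x‖)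
    (hs : ∀ x, ‖⨍ h in s, ω (a₄ * a₂ * τ h x) ∂μ - ω (a₄ * a₂) * ω x‖ ≤ η * ‖x‖) :
    ‖⨍ h in s, ⨍ g in t, ω (τ h a₁ * τ g a₂ * τ (g * h) a₃ * τ g a₄ * τ h a₅) ∂μ ∂μ
        - ω (a₅ * a₁) * ω a₃ * ω (a₂ * a₄)‖
      ≤ η * (‖a₂‖ * ‖a₃‖ * ‖a₄‖) + ‖ω (a₅ * a₁)‖ * (η * ‖a₃‖) := by
  refine norm_setAverage_sub_le_add hint (hint'.const_mul (ω (a₅ * a₁))) (by positivity)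
    (fun h _ => ?_) ?_
  · simp only [apply_correlation_eq htr hinv, ← apply_map_inv_mul_map_mul htr hinv a₂ a₃ a₄]
    calc _ ≤ η * ‖τ h⁻¹ (a₂ * τ h a₃ * a₄)‖ := ht _
      _ ≤ η * (‖a₂‖ * ‖a₃‖ * ‖a₄‖) := by
          gcongr
          exact norm_map_inv_mul_map_mul_le τ a₂ a₃ a₄ h
  · have hfactor : ⨍ h in s, ω (a₅ * a₁) * ω (a₄ * a₂ * τ h a₃) ∂μ
          - ω (a₅ * a₁) * ω a₃ * ω (a₂ * a₄)
        = ω (a₅ * a₁) * (⨍ h in s, ω (a₄ * a₂ * τ h a₃) ∂μ - ω (a₄ * a₂) * ω a₃) := by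
      rw [average, integral_const_mul, ← average, htr a₂ a₄]
      ring
    rw [hfactor, norm_mul]
    gcongr
    exact hs a₃

theorem IsState.integrableOn_setAverage_correlation (hω : IsState ω)
    (htr : ∀ a b, ω (a * b) = ω (b * a)) (hinv : ∀ g a, ω (τ g a) = ω a) {K s t : Set G}
    (hK : MeasurableSet K) {a₁ a₂ a₃ a₄ a₅ : A}
    (hmeas : Measurable fun p : K × K =>
      ω (τ p.2 a₁ * τ p.1 a₂ * τ (p.1 * p.2) a₃ * τ p.1 a₄ * τ p.2 a₅))
    (hsK : s ⊆ K) (htK : t ⊆ K) (hs : μ s < ⊤) (ht : μ t < ⊤) :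
    IntegrableOn (fun h => ⨍ g in t,
      ω (τ h a₁ * τ g a₂ * τ (g * h) a₃ * τ g a₄ * τ h a₅) ∂μ) s μ := by
  have hswap := hmeas.comp measurable_swap
  simp only [Function.comp_def, Prod.fst_swap, Prod.snd_swap] at hswap
  refine integrableOn_setAverage_right (C := ‖a₅ * a₁‖ * (‖a₂‖ * ‖a₃‖ * ‖a₄‖))
    (f := fun h g => ω (τ h a₁ * τ g a₂ * τ (g * h) a₃ * τ g a₄ * τ h a₅))
    hK hK hswap hsK htK hs ht fun h g => ?_
  rw [apply_correlation_eq htr hinv]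
  calc _ ≤ ‖a₅ * a₁‖ * ‖τ h⁻¹ (a₂ * τ h a₃ * a₄)‖ := hω.norm_apply_mul_map_le _ _ g
    _ ≤ ‖a₅ * a₁‖ * (‖a₂‖ * ‖a₃‖ * ‖a₄‖) := by
        gcongr
        exact norm_map_inv_mul_map_mul_le τ a₂ a₃ a₄ h

end Correlations

theorem prop_4_3_3_general {A G ι : Type*} [CStarAlgebra A] {ω : A →ₗ[ℂ] ℂ} (hω : IsState ω)
    (htr : ∀ a b, ω (a * b) = ω (b * a)) [CommGroup G] [MeasurableSpace G] [MeasurableMul G]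
    {μ : Measure G} [μ.IsMulRightInvariant] {K : Subsemigroup G} (hK : MeasurableSet (K : Set G))
    {τ : G →* (A ≃⋆ₐ[ℂ] A)} (hinv : ∀ g a, ω (τ g a) = ω a)
    (hmeas : ∀ a b, Measurable fun g : K => ω (a * τ g b))
    (hErg : ∃ F : FolnerNetIn μ (K : Set G), F.ErgodicAlong ω τ) {a₁ a₂ a₃ a₄ a₅ : A}
    (hmeas₅ : Measurable fun p : K × K =>
      ω (τ p.2 a₁ * τ p.1 a₂ * τ (p.1 * p.2) a₃ * τ p.1 a₄ * τ p.2 a₅))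
    {l : Filter ι} {Λ₁ Λ₂ : ι → Set G} (hΛ₁ : IsFolnerIn μ K l Λ₁) (hΛ₂ : IsFolnerIn μ K l Λ₂)
    {ε : ℝ} (hε : 0 < ε) : ∀ᶠ i in l, ∀ g₁ ∈ K, ∀ g₂ ∈ K,
      ‖(μ.real (Λ₁ i) * μ.real (Λ₂ i))⁻¹ • (∫ h in Λ₁ i * {g₁}, ∫ g in Λ₂ i * {g₂},
          ω (τ h a₁ * τ g a₂ * τ (g * h) a₃ * τ g a₄ * τ h a₅) ∂μ ∂μ)
        - ω (a₅ * a₁) * ω a₃ * ω (a₂ * a₄)‖ ≤ ε := by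
  obtain ⟨F, hF⟩ := hErg
  have hmeasK : ∀ a b, AEStronglyMeasurable (fun g => ω (a * τ g b)) (μ.restrict K) := fun a b =>
    (aemeasurable_restrict_of_measurable_subtype hK (hmeas a b)).aestronglyMeasurable
  set M := ‖a₂‖ * ‖a₃‖ * ‖a₄‖ + ‖ω (a₅ * a₁)‖ * ‖a₃‖
  have hη : 0 < ε / (M + 1) := by positivity
  filter_upwards [hΛ₁.eventually_measure, hΛ₂.eventually_measure,
    hω.eventually_norm_setAverage_apply_mul_sub_le hinv hmeasK hF hΛ₁ (a₄ * a₂) hη,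
    hω.eventually_norm_setAverage_apply_mul_sub_le hinv hmeasK hF hΛ₂ (a₅ * a₁) hη]
    with i hi₁ hi₂ houter hinner g₁ hg₁ g₂ hg₂
  have hsK : Λ₁ i * {g₁} ⊆ K := mul_singleton_subset (hΛ₁.subset i) hg₁
  have htK : Λ₂ i * {g₂} ⊆ K := mul_singleton_subset (hΛ₂.subset i) hg₂
  have hs : μ (Λ₁ i * {g₁}) < ⊤ := (measure_mul_singleton μ _ g₁).trans_lt hi₁.2
  have ht : μ (Λ₂ i * {g₂}) < ⊤ := (measure_mul_singleton μ _ g₂).trans_lt hi₂.2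
  have hbound := norm_setAverage_setAverage_correlation_sub_le htr hinv a₁ a₂ a₃ a₄ a₅ hη.le
    (hω.integrableOn_setAverage_correlation htr hinv hK hmeas₅ hsK htK hs ht)
    (integrableOn_of_norm_le_const (hmeasK _ _) hsK hs fun g => hω.norm_apply_mul_map_le _ _ g)
    (hinner g₂ htK) (houter g₁ hsK)
  simp only [setAverage_setAverage, measureReal_def, measure_mul_singleton] at hbound
  calc _ ≤ _ := hbound
    _ = ε / (M + 1) * M := by ring
    _ ≤ ε / (M + 1) * (M + 1) := by gcongr; exact (lt_add_one _).le
    _ = ε := div_mul_cancel₀ _ (by positivity)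

/-- **Proposition 4.3(3).** If moreover `(A, ω, τ, K)` is uniformly asymptotically abelian
with respect to `(Λ1 α)` and `ω` is tracial, then
`lim_α sup_{g₁ g₂ ∈ K} |M_{α,g₁,g₂}(ω (τ_h(a₁) τ_g(a₂) τ_{gh}(a₃) τ_g(a₄) τ_h(a₅)))
  − ω(a₅a₁) ω(a₃) ω(a₂a₄)| = 0`. -/
theorem prop_4_3_3
    -- a unital C*-algebra A
    {A : Type*} [NormedRing A] [StarRing A] [CStarRing A] [NormedAlgebra ℂ A]
    [CompleteSpace A] [StarModule ℂ A]
    -- a tracial state ω on A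
    (ω : A →ₗ[ℂ] ℂ) (hω_pos : ∀ a : A, 0 ≤ ω (star a * a)) (hω_one : ω 1 = 1)
    (hω_tracial : ∀ a b : A, ω (a * b) = ω (b * a))
    -- a right invariant measure group (G, Σ, μ) with G abelian
    {G : Type*} [CommGroup G] [MeasurableSpace G] (μ : Measure G)
    (hTrans : ∀ (V : Set G) (g : G), MeasurableSet V → MeasurableSet (V * {g}))
    (hRight : ∀ (V : Set G) (g : G), MeasurableSet V → μ (V * {g}) = μ V)
    (hInvMeas : Measurable (fun g : G => g⁻¹))
    (hInvInv : ∀ V : Set G, MeasurableSet V → μ V⁻¹ = μ V)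
    -- K is a Følner semigroup in G
    (K : Set G) (hKmeas : MeasurableSet K) (hKmul : ∀ g ∈ K, ∀ h ∈ K, g * h ∈ K)
    -- the action τ, making (A, ω, τ, K) a C*-dynamical system
    (τ : G → A ≃⋆ₐ[ℂ] A)
    (hτ_one : ∀ a : A, τ 1 a = a)
    (hτ_mul : ∀ g h a, τ g (τ h a) = τ (g * h) a)
    (hω_inv : ∀ g a, ω (τ g a) = ω a)
    (hτ_meas : ∀ a b : A, Measurable fun g : K => ω (a * τ (g : G) b))
    -- g ↦ ‖[a, τ_g(b)]‖ is Σ|_K-measurable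
    (hcomm_meas : ∀ a b : A, Measurable fun g : K => ‖a * τ (g : G) b - τ (g : G) b * a‖)
    -- the system is ergodic (w.r.t. some, equivalently every, Følner net in K)
    (hErg : ∃ F : FolnerNetIn μ K, F.ErgodicAlong ω τ)
    -- the measurability hypothesis: (g,h) ↦ ω(τ_h(a₁) τ_g(a₂) τ_{gh}(a₃) τ_g(a₄) τ_h(a₅))
    (hmeas5 : ∀ a₁ a₂ a₃ a₄ a₅ : A, Measurable fun p : K × K =>
      ω (τ (p.2 : G) a₁ * τ (p.1 : G) a₂ * τ ((p.1 : G) * (p.2 : G)) a₃ *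
          τ (p.1 : G) a₄ * τ (p.2 : G) a₅))
    -- Følner nets (Λ1 α), (Λ2 α) in K indexed by the same directed set
    {ι : Type*} [Preorder ι] [Nonempty ι] [IsDirected ι (· ≤ ·)]
    (Λ1 Λ2 : ι → Set G)
    (hΛ1 : ∀ α, MeasurableSet (Λ1 α) ∧ Λ1 α ⊆ K)
    (hΛ1fin : ∀ᶠ α in atTop, 0 < μ (Λ1 α) ∧ μ (Λ1 α) < ⊤)
    (hΛ1folner : ∀ g ∈ K, Tendsto
      (fun α => (μ (symmDiff (Λ1 α) (Λ1 α * {g}))).toReal / (μ (Λ1 α)).toReal) atTop (𝓝 0))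
    (hΛ2 : ∀ α, MeasurableSet (Λ2 α) ∧ Λ2 α ⊆ K)
    (hΛ2fin : ∀ᶠ α in atTop, 0 < μ (Λ2 α) ∧ μ (Λ2 α) < ⊤)
    (hΛ2folner : ∀ g ∈ K, Tendsto
      (fun α => (μ (symmDiff (Λ2 α) (Λ2 α * {g}))).toReal / (μ (Λ2 α)).toReal) atTop (𝓝 0))
    -- the system is uniformly asymptotically abelian with respect to (Λ1 α) (ε-form)
    (hUAA : ∀ a b : A, ∀ ε > (0 : ℝ), ∀ᶠ α in atTop, ∀ h ∈ K,
      (μ (Λ1 α)).toReal⁻¹ * ∫ g in Λ1 α * {h}, ‖a * τ g b - τ g b * a‖ ∂μ ≤ ε) :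
    -- conclusion, with the `lim sup = 0` expressed in ε-form
    ∀ a₁ a₂ a₃ a₄ a₅ : A, ∀ ε > (0 : ℝ), ∀ᶠ α in atTop, ∀ g₁ ∈ K, ∀ g₂ ∈ K,
      ‖((μ (Λ1 α)).toReal * (μ (Λ2 α)).toReal)⁻¹ •
          (∫ h in Λ1 α * {g₁}, ∫ g in Λ2 α * {g₂},
            ω (τ h a₁ * τ g a₂ * τ (g * h) a₃ * τ g a₄ * τ h a₅) ∂μ ∂μ)
        - ω (a₅ * a₁) * ω a₃ * ω (a₂ * a₄)‖ ≤ ε := by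
  intro a₁ a₂ a₃ a₄ a₅ ε hε
  let _ : CStarAlgebra A := {}
  have := measurableMul_of_measurableSet_mul_singleton hTrans
  have := isMulRightInvariant_of_measure_mul_singleton hRight
  exact prop_4_3_3_general (K := ⟨K, fun hg hh => hKmul _ hg _ hh⟩)
    (τ := MonoidHom.mk' τ fun g h => StarAlgEquiv.ext fun a => (hτ_mul g h a).symm)
    ⟨hω_pos, hω_one⟩ hω_tracial hKmeas hω_inv hτ_meas hErg (hmeas5 a₁ a₂ a₃ a₄ a₅)
    ⟨fun α => (hΛ1 α).1, fun α => (hΛ1 α).2, hΛ1fin, hΛ1folner⟩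
    ⟨fun α => (hΛ2 α).1, fun α => (hΛ2 α).2, hΛ2fin, hΛ2folner⟩ hε
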